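/- For all integers m, n ≥ 1 with (m,n) ≠ (2,1), χ_la(P_{2m} ∨ K_{2n−1}) = 2n + 1; in the exceptional case, χ_la(P_4 ∨ K_1) = 4. -/

import Mathlib

open Finset SimpleGraph
open scoped Classical

/-- The induced vertex label (weight) of `x`: the sum of `f` over all edges incident to `x`. -/
noncomputable def vertexWeight {V : Type*} [Fintype V] (G : SimpleGraph V)
    (f : Sym2 V → ℕ) (x : V) : ℕ :=
  ∑ e ∈ G.edgeFinset.filter (fun e => x ∈ e), f e

/-- `f` is a local antimagic labeling of `G`: it restricts to a bijection from the edge set of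
`G` onto `{1, …, q}` (where `q` is the number of edges), and adjacent vertices get distinct
induced vertex labels. -/
def IsLocalAntimagic {V : Type*} [Fintype V] (G : SimpleGraph V) (f : Sym2 V → ℕ) : Prop :=
  Set.BijOn f G.edgeSet (Set.Icc 1 G.edgeSet.ncard) ∧
  ∀ ⦃x y : V⦄, G.Adj x y → vertexWeight G f x ≠ vertexWeight G f y

/-- The number of distinct induced vertex labels, `c(f)`. -/
noncomputable def colorCount {V : Type*} [Fintype V] (G : SimpleGraph V)
    (f : Sym2 V → ℕ) : ℕ :=
  (Finset.univ.image (vertexWeight G f)).card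

/-- The local antimagic chromatic number `χ_la(G)`. -/
noncomputable def chiLA {V : Type*} [Fintype V] (G : SimpleGraph V) : ℕ :=
  sInf { n | ∃ f : Sym2 V → ℕ, IsLocalAntimagic G f ∧ colorCount G f = n }

/-- The join `G ∨ H` of two vertex-disjoint graphs. -/
def joinG {α β : Type*} (G : SimpleGraph α) (H : SimpleGraph β) : SimpleGraph (α ⊕ β) :=
  SimpleGraph.fromRel (fun x y =>
    (∃ a b, x = Sum.inl a ∧ y = Sum.inl b ∧ G.Adj a b) ∨
    (∃ a b, x = Sum.inr a ∧ y = Sum.inr b ∧ H.Adj a b) ∨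
    (∃ a b, x = Sum.inl a ∧ y = Sum.inr b))


/-- Contribution of the path edges to the weight of the `i`-th path vertex. -/
def pathPart (N : ℕ) (e : ℕ → ℕ) (i : ℕ) : ℕ :=
  (if i = 0 then 0 else e (i - 1)) + (if i + 1 < N then e i else 0)

/-- Labels on path edges and join edges, using `1, …, D` with `D = N - 1 + N * k`. -/
structure Lab (N k : ℕ) (e : ℕ → ℕ) (M : ℕ → ℕ → ℕ) : Prop where
  e_pos : ∀ i, i + 1 < N → 1 ≤ e i
  e_le : ∀ i, i + 1 < N → e i ≤ N - 1 + N * k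
  M_pos : ∀ i c, i < N → c < k → 1 ≤ M i c
  M_le : ∀ i c, i < N → c < k → M i c ≤ N - 1 + N * k
  e_inj : ∀ i j, i + 1 < N → j + 1 < N → e i = e j → i = j
  M_inj : ∀ i c j d, i < N → c < k → j < N → d < k → M i c = M j d → i = j ∧ c = d
  e_M : ∀ i j c, i + 1 < N → j < N → c < k → e i ≠ M j c

/-- Labels with two alternating weights along the path. -/
structure Good (N k : ℕ) (e : ℕ → ℕ) (M : ℕ → ℕ → ℕ) (A B : ℕ) : Prop extends Lab N k e M where
  sum : ∀ i, i < N → pathPart N e i + ∑ c ∈ range k, M i c = if i % 2 = 0 then A else B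
  ne : A ≠ B
  mono : ∀ c d, c ≤ d → d < k → ∑ i ∈ range N, M i c ≤ ∑ i ∈ range N, M i d
  bdA : A < ∑ i ∈ range N, M i 0 + (k - 1) * (N - 1 + N * k + 1)
  bdB : B < ∑ i ∈ range N, M i 0 + (k - 1) * (N - 1 + N * k + 1)

/-- Label of the edge `{c, d}` of the complete graph, relative to `D`. -/
def kLab (D c d : ℕ) : ℕ := D + 1 + (max c d).choose 2 + min c d

lemma kLab_comm (D c d : ℕ) : kLab D c d = kLab D d c := by
  unfold kLab; rw [max_comm, min_comm]

lemma choose_two_succ (j : ℕ) : (j + 1).choose 2 = j.choose 2 + j := by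
  rw [Nat.choose_succ_succ' j 1]; simp; ring

lemma choose_two_lt {a b : ℕ} (h : a < b) : a.choose 2 + a ≤ b.choose 2 := by
  rw [← choose_two_succ]; exact Nat.choose_le_choose 2 h

lemma kLab_lt (D : ℕ) {a b d : ℕ} (h : a < b) (h1 : d ≠ a) (h2 : d ≠ b) :
    kLab D a d < kLab D b d := by
  unfold kLab
  rcases lt_or_gt_of_ne h1 with h1 | h1
  · rw [max_eq_left h1.le, min_eq_right h1.le, max_eq_left (by omega), min_eq_right (by omega)]
    have := choose_two_lt h
    omega
  · rw [max_eq_right h1.le, min_eq_left h1.le]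
    rcases lt_or_gt_of_ne h2 with h2 | h2
    · rw [max_eq_left h2.le, min_eq_right h2.le]
      have := choose_two_lt h2
      omega
    · rw [max_eq_right h2.le, min_eq_left h2.le]
      omega

lemma kLab_inj (D : ℕ) {a b c d : ℕ} (h : a < b) (h' : c < d) (he : kLab D a b = kLab D c d) :
    a = c ∧ b = d := by
  unfold kLab at he
  rw [max_eq_right h.le, min_eq_left h.le, max_eq_right h'.le, min_eq_left h'.le] at he
  rcases lt_trichotomy b d with hl | hl | hl
  · have := choose_two_lt hl; omega
  · subst hl; omega
  · have := choose_two_lt hl; omega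

lemma kLab_le (D k : ℕ) {a b : ℕ} (h : a < b) (hb : b < k) : kLab D a b ≤ D + k.choose 2 := by
  unfold kLab
  rw [max_eq_right h.le, min_eq_left h.le]
  have := choose_two_lt hb; omega

lemma kLab_pos (D a b : ℕ) : D + 1 ≤ kLab D a b := by unfold kLab; omega

section joinadj
variable {α β : Type*} (G : SimpleGraph α) (H : SimpleGraph β)

lemma joinG_ll (a b : α) : (joinG G H).Adj (Sum.inl a) (Sum.inl b) ↔ G.Adj a b := by
  simp only [joinG, SimpleGraph.fromRel_adj]
  constructor
  · rintro ⟨_, h⟩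
    have := G.symm
    simp at h
    rcases h with h | h
    · exact h
    · exact h.symm
  · intro h
    refine ⟨fun hh => h.ne (Sum.inl_injective hh), Or.inl (Or.inl ⟨a, b, rfl, rfl, h⟩)⟩

lemma joinG_rr (a b : β) : (joinG G H).Adj (Sum.inr a) (Sum.inr b) ↔ H.Adj a b := by
  simp only [joinG, SimpleGraph.fromRel_adj]
  constructor
  · rintro ⟨_, h⟩
    simp at h
    rcases h with h | h
    · exact h
    · exact h.symm
  · intro h
    refine ⟨fun hh => h.ne (Sum.inr_injective hh), Or.inl (Or.inr (Or.inl ⟨a, b, rfl, rfl, h⟩))⟩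

lemma joinG_lr (a : α) (b : β) : (joinG G H).Adj (Sum.inl a) (Sum.inr b) := by
  simp [joinG, SimpleGraph.fromRel_adj]

lemma joinG_rl (a : α) (b : β) : (joinG G H).Adj (Sum.inr b) (Sum.inl a) :=
  (joinG_lr G H a b).symm

end joinadj

lemma vertexWeight_eq {V : Type*} [Fintype V] (G : SimpleGraph V) (f : Sym2 V → ℕ) (x : V) :
    vertexWeight G f x = ∑ y, if G.Adj x y then f s(x, y) else 0 := by
  unfold vertexWeight
  rw [← Finset.sum_filter]
  symm
  apply Finset.sum_bij (fun y _ => s(x, y))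
  · intro y hy
    simpa using hy
  · intro y hy z hz h
    exact Sym2.congr_right.mp h
  · intro e he
    induction e with
    | _ a b =>
    simp only [Finset.mem_filter, SimpleGraph.mem_edgeFinset, SimpleGraph.mem_edgeSet,
      Sym2.mem_iff] at he
    rcases he with ⟨h, rfl | rfl⟩
    · exact ⟨b, by simpa using h, rfl⟩
    · exact ⟨a, by simpa using h.symm, Sym2.eq_swap⟩
  · intros; rfl

/-- The graph `P_N ∨ K_k`. -/
abbrev PK (N k : ℕ) : SimpleGraph (Fin N ⊕ Fin k) :=
  joinG (pathGraph N) (⊤ : SimpleGraph (Fin k))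

/-- Two-variable version of the labeling. -/
def lab2 (N k : ℕ) (e : ℕ → ℕ) (M : ℕ → ℕ → ℕ) : Fin N ⊕ Fin k → Fin N ⊕ Fin k → ℕ
  | Sum.inl i, Sum.inl j => e (min i.val j.val)
  | Sum.inl i, Sum.inr c => M i.val c.val
  | Sum.inr c, Sum.inl i => M i.val c.val
  | Sum.inr c, Sum.inr d => kLab (N - 1 + N * k) c.val d.val

/-- The labeling of edges. -/
def lab (N k : ℕ) (e : ℕ → ℕ) (M : ℕ → ℕ → ℕ) : Sym2 (Fin N ⊕ Fin k) → ℕ :=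
  Sym2.lift ⟨lab2 N k e M, by
    rintro (i | c) (j | d)
    · simp [lab2, min_comm]
    · rfl
    · rfl
    · simp [lab2, kLab_comm]⟩

lemma path_sum (N : ℕ) (e : ℕ → ℕ) (i : Fin N) :
    (∑ j : Fin N, if (pathGraph N).Adj i j then e (min i.val j.val) else 0) =
      pathPart N e i.val := by
  have h1 : ∀ j : Fin N, (if (pathGraph N).Adj i j then e (min i.val j.val) else 0) =
      (fun j : ℕ => (if j = i.val - 1 then (if i.val = 0 then 0 else e (i.val - 1)) else 0)
        + (if j = i.val + 1 then e i.val else 0)) j.val := by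
    intro j
    simp only [pathGraph_adj]
    by_cases a : i.val + 1 = j.val
    · rw [if_pos (Or.inl a), min_eq_left (by omega), if_neg (by omega), if_pos a.symm, zero_add]
    · by_cases b : j.val + 1 = i.val
      · rw [if_pos (Or.inr b), min_eq_right (by omega), if_pos (by omega), if_neg (by omega),
          if_neg (by omega), add_zero]
        congr 1; omega
      · rw [if_neg (by omega)]
        split_ifs <;> omega
  rw [Finset.sum_congr rfl (fun j _ => h1 j)]
  rw [Fin.sum_univ_eq_sum_range (fun j : ℕ => (if j = i.val - 1 then (if i.val = 0 then 0 else e (i.val - 1)) else 0)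
        + (if j = i.val + 1 then e i.val else 0)) N]
  rw [Finset.sum_add_distrib, Finset.sum_ite_eq', Finset.sum_ite_eq']
  have : i.val - 1 ∈ range N := by simp; omega
  rw [if_pos this]
  simp only [Finset.mem_range, pathPart]

lemma weight_inl (N k : ℕ) (e : ℕ → ℕ) (M : ℕ → ℕ → ℕ) (i : Fin N) :
    vertexWeight (PK N k) (lab N k e M) (Sum.inl i) =
      pathPart N e i.val + ∑ c ∈ range k, M i.val c := by
  rw [vertexWeight_eq, Fintype.sum_sum_type]
  congr 1
  · rw [← path_sum]
    refine Finset.sum_congr rfl fun j _ => ?_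
    simp only [joinG_ll]
    rfl
  · rw [← Fin.sum_univ_eq_sum_range]
    refine Finset.sum_congr rfl fun j _ => ?_
    rw [if_pos (joinG_lr _ _ _ _)]
    rfl

lemma weight_inr (N k : ℕ) (e : ℕ → ℕ) (M : ℕ → ℕ → ℕ) (c : Fin k) :
    vertexWeight (PK N k) (lab N k e M) (Sum.inr c) =
      ∑ i ∈ range N, M i c.val +
        ∑ d : Fin k, if d = c then 0 else kLab (N - 1 + N * k) c.val d.val := by
  rw [vertexWeight_eq, Fintype.sum_sum_type]
  congr 1
  · rw [← Fin.sum_univ_eq_sum_range (fun i => M i c.val)]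
    refine Finset.sum_congr rfl fun j _ => ?_
    rw [if_pos (joinG_rl _ _ _ _)]
    rfl
  · refine Finset.sum_congr rfl fun j _ => ?_
    simp only [joinG_rr, SimpleGraph.top_adj]
    by_cases h : j = c
    · rw [if_pos h, if_neg (by simp [h])]
    · rw [if_neg h, if_pos (Ne.symm h)]
      rfl

lemma degree_eq {V : Type*} [Fintype V] (G : SimpleGraph V) (x : V) :
    G.degree x = ∑ y, if G.Adj x y then 1 else 0 := by
  rw [← Finset.sum_filter, ← SimpleGraph.card_neighborFinset_eq_degree]
  rw [Finset.sum_const, smul_eq_mul, mul_one]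
  congr 1
  ext y; simp

lemma pathPart_one_sum (N : ℕ) (hN : 1 ≤ N) :
    ∑ i ∈ range N, pathPart N (fun _ => 1) i = 2 * (N - 1) := by
  obtain ⟨n, rfl⟩ : ∃ n, N = n + 1 := ⟨N - 1, by omega⟩
  unfold pathPart
  rw [Finset.sum_add_distrib, Finset.sum_range_succ', Finset.sum_range_succ]
  have : ∑ x ∈ range n, (if x + 1 < n + 1 then 1 else 0) = n := by
    rw [Finset.sum_congr rfl (g := fun _ => 1)]
    · simp
    · intro x hx
      simp at hx
      simp [hx]
  rw [this]
  simp
  omega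

lemma ncard_PK (N k : ℕ) (hN : 1 ≤ N) :
    (PK N k).edgeSet.ncard = N - 1 + N * k + k.choose 2 := by
  have h := (PK N k).sum_degrees_eq_twice_card_edges
  have hc : (PK N k).edgeSet.ncard = (PK N k).edgeFinset.card := by
    rw [← SimpleGraph.coe_edgeFinset, Set.ncard_coe_finset]
  rw [hc]
  have h1 : ∀ i : Fin N, (PK N k).degree (Sum.inl i) = pathPart N (fun _ => 1) i.val + k := by
    intro i
    rw [degree_eq, Fintype.sum_sum_type]
    congr 1
    · rw [← path_sum]
      refine Finset.sum_congr rfl fun j _ => ?_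
      simp only [joinG_ll]
    · simp [joinG_lr]
  have h2 : ∀ c : Fin k, (PK N k).degree (Sum.inr c) = N + (k - 1) := by
    intro c
    rw [degree_eq, Fintype.sum_sum_type]
    congr 1
    · simp [joinG_rl]
    · simp only [joinG_rr, SimpleGraph.top_adj]
      rw [← Finset.sum_filter, Finset.sum_const, smul_eq_mul, mul_one, Finset.filter_ne,
        Finset.card_erase_of_mem (Finset.mem_univ _)]
      simp
  rw [Fintype.sum_sum_type, Finset.sum_congr rfl (fun i _ => h1 i),
    Finset.sum_congr rfl (fun c _ => h2 c), Finset.sum_add_distrib,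
    Fin.sum_univ_eq_sum_range (fun i => pathPart N (fun _ => 1) i), pathPart_one_sum N hN] at h
  simp only [Finset.sum_const, Finset.card_univ, Fintype.card_fin, smul_eq_mul] at h
  have h3 : 2 * k.choose 2 = k * (k - 1) := by
    rw [Nat.choose_two_right, Nat.mul_div_cancel']
    exact (Nat.even_mul_pred_self k).two_dvd
  have h4 : k * (N + (k - 1)) = N * k + k * (k - 1) := by ring
  omega

lemma edge_cases (N k : ℕ) (x : Sym2 (Fin N ⊕ Fin k)) (hx : x ∈ (PK N k).edgeSet) :
    (∃ i j : Fin N, i.val + 1 = j.val ∧ x = s(Sum.inl i, Sum.inl j)) ∨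
    (∃ (i : Fin N) (c : Fin k), x = s(Sum.inl i, Sum.inr c)) ∨
    (∃ c d : Fin k, c < d ∧ x = s(Sum.inr c, Sum.inr d)) := by
  induction x with
  | _ a b =>
  rw [SimpleGraph.mem_edgeSet] at hx
  rcases a with i | c <;> rcases b with j | d
  · left
    rw [joinG_ll, pathGraph_adj] at hx
    rcases hx with h | h
    · exact ⟨i, j, h, rfl⟩
    · exact ⟨j, i, h, Sym2.eq_swap⟩
  · exact Or.inr (Or.inl ⟨i, d, rfl⟩)
  · exact Or.inr (Or.inl ⟨j, c, Sym2.eq_swap⟩)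
  · right; right
    rw [joinG_rr, SimpleGraph.top_adj] at hx
    rcases lt_or_gt_of_ne hx with h | h
    · exact ⟨c, d, h, rfl⟩
    · exact ⟨d, c, h, Sym2.eq_swap⟩

lemma lab_bij {N k : ℕ} {e : ℕ → ℕ} {M : ℕ → ℕ → ℕ} (hN : 1 ≤ N) (L : Lab N k e M) :
    Set.BijOn (lab N k e M) (PK N k).edgeSet (Set.Icc 1 (PK N k).edgeSet.ncard) := by
  have vll : ∀ i j : Fin N, i.val + 1 = j.val →
      lab N k e M s(Sum.inl i, Sum.inl j) = e i.val := by
    intro i j h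
    change e (min i.val j.val) = _
    rw [min_eq_left (by omega)]
  have vlr : ∀ (i : Fin N) (c : Fin k), lab N k e M s(Sum.inl i, Sum.inr c) = M i.val c.val :=
    fun _ _ => rfl
  have vrr : ∀ c d : Fin k, lab N k e M s(Sum.inr c, Sum.inr d) =
      kLab (N - 1 + N * k) c.val d.val := fun _ _ => rfl
  have maps : Set.MapsTo (lab N k e M) (PK N k).edgeSet
      (Set.Icc 1 (PK N k).edgeSet.ncard) := by
    intro x hx
    rw [ncard_PK N k hN, Set.mem_Icc]
    rcases edge_cases N k x hx with ⟨i, j, h, rfl⟩ | ⟨i, c, rfl⟩ | ⟨c, d, h, rfl⟩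
    · rw [vll i j h]
      have := L.e_pos i (by omega)
      have := L.e_le i (by omega)
      omega
    · rw [vlr]
      have := L.M_pos i c i.2 c.2
      have := L.M_le i c i.2 c.2
      omega
    · rw [vrr]
      have := kLab_pos (N - 1 + N * k) c.val d.val
      have := kLab_le (N - 1 + N * k) k (a := c.val) (b := d.val) h d.2
      omega
  have inj : Set.InjOn (lab N k e M) (PK N k).edgeSet := by
    intro x hx y hy hxy
    rcases edge_cases N k x hx with ⟨i, j, h, rfl⟩ | ⟨i, c, rfl⟩ | ⟨c, d, h, rfl⟩ <;>
    rcases edge_cases N k y hy with ⟨i', j', h', rfl⟩ | ⟨i', c', rfl⟩ | ⟨c', d', h', rfl⟩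
    · rw [vll i j h, vll i' j' h'] at hxy
      have := L.e_inj i i' (by omega) (by omega) hxy
      have hi : i = i' := Fin.ext this
      have hj : j = j' := Fin.ext (by omega)
      rw [hi, hj]
    · rw [vll i j h, vlr] at hxy
      exact absurd hxy (L.e_M _ _ _ (by omega) i'.2 c'.2)
    · rw [vll i j h, vrr] at hxy
      have := kLab_pos (N - 1 + N * k) c'.val d'.val
      have := L.e_le i (by omega)
      omega
    · rw [vll i' j' h', vlr] at hxy
      exact absurd hxy.symm (L.e_M _ _ _ (by omega) i.2 c.2)
    · rw [vlr, vlr] at hxy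
      have := L.M_inj _ _ _ _ i.2 c.2 i'.2 c'.2 hxy
      rw [Fin.ext this.1, Fin.ext this.2]
    · rw [vlr, vrr] at hxy
      have := kLab_pos (N - 1 + N * k) c'.val d'.val
      have := L.M_le i c i.2 c.2
      omega
    · rw [vll i' j' h', vrr] at hxy
      have := kLab_pos (N - 1 + N * k) c.val d.val
      have := L.e_le i' (by omega)
      omega
    · rw [vlr, vrr] at hxy
      have := kLab_pos (N - 1 + N * k) c.val d.val
      have := L.M_le i' c' i'.2 c'.2
      omega
    · rw [vrr, vrr] at hxy
      have := kLab_inj _ h h' hxy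
      rw [Fin.ext this.1, Fin.ext this.2]
  refine ⟨maps, inj, ?_⟩
  have himg : lab N k e M '' (PK N k).edgeSet = Set.Icc 1 (PK N k).edgeSet.ncard := by
    apply Set.eq_of_subset_of_ncard_le maps.image_subset _ (Set.finite_Icc _ _)
    rw [inj.ncard_image]
    rw [← Finset.coe_Icc, Set.ncard_coe_finset]
    simp
  exact himg.symm.subset

lemma kSum_lt {k : ℕ} (D : ℕ) {a b : Fin k} (h : a < b) (hk : 3 ≤ k) :
    (∑ d : Fin k, if d = a then 0 else kLab D a.val d.val) <
      ∑ d : Fin k, if d = b then 0 else kLab D b.val d.val := by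
  rw [← Equiv.sum_comp (Equiv.swap a b)]
  have hab : a ≠ b := h.ne
  have key : ∀ d : Fin k, d ≠ a → d ≠ b →
      (if Equiv.swap a b d = a then 0 else kLab D a.val (Equiv.swap a b d).val) <
        if d = b then 0 else kLab D b.val d.val := by
    intro d h1 h2
    rw [Equiv.swap_apply_of_ne_of_ne h1 h2, if_neg h1, if_neg h2]
    exact kLab_lt D h (fun hh => h1 (Fin.ext hh)) (fun hh => h2 (Fin.ext hh))
  apply Finset.sum_lt_sum
  · intro d _
    by_cases h1 : d = a
    · subst h1
      rw [Equiv.swap_apply_left, if_neg hab.symm, if_neg hab, kLab_comm]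
    · by_cases h2 : d = b
      · subst h2
        rw [Equiv.swap_apply_right, if_pos rfl, if_pos rfl]
      · exact (key d h1 h2).le
  · obtain ⟨d, hd⟩ : ∃ d, d ∉ ({a, b} : Finset (Fin k)) := by
      by_contra! hcon
      have h1 : (Finset.univ : Finset (Fin k)) ⊆ {a, b} := fun d _ => hcon d
      have h2 := (Finset.card_le_card h1).trans Finset.card_le_two
      simp at h2
      omega
    simp only [Finset.mem_insert, Finset.mem_singleton, not_or] at hd
    exact ⟨d, Finset.mem_univ _, key d hd.1 hd.2⟩

lemma weight_inr_lt {N k : ℕ} {e : ℕ → ℕ} {M : ℕ → ℕ → ℕ} {A B : ℕ} (g : Good N k e M A B)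
    (hk : k ≠ 2) {a b : Fin k} (h : a < b) :
    vertexWeight (PK N k) (lab N k e M) (Sum.inr a) <
      vertexWeight (PK N k) (lab N k e M) (Sum.inr b) := by
  rw [weight_inr, weight_inr]
  have hk3 : 3 ≤ k := by
    have : a.val < b.val := h
    omega
  exact add_lt_add_of_le_of_lt (g.mono _ _ (le_of_lt h) b.2) (kSum_lt _ h hk3)

lemma weight_inr_big {N k : ℕ} {e : ℕ → ℕ} {M : ℕ → ℕ → ℕ} {A B : ℕ} (g : Good N k e M A B)
    (c : Fin k) :
    A < vertexWeight (PK N k) (lab N k e M) (Sum.inr c) ∧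
    B < vertexWeight (PK N k) (lab N k e M) (Sum.inr c) := by
  rw [weight_inr]
  have h1 := g.mono 0 c.val (Nat.zero_le _) c.2
  have h2 : (k - 1) * (N - 1 + N * k + 1) ≤
      ∑ d : Fin k, if d = c then 0 else kLab (N - 1 + N * k) c.val d.val := by
    calc (k - 1) * (N - 1 + N * k + 1)
        = ∑ d : Fin k, if d = c then 0 else (N - 1 + N * k + 1) := by
          have : ∀ d : Fin k, (if d = c then 0 else (N - 1 + N * k + 1)) =
            if d ≠ c then (N - 1 + N * k + 1) else 0 := by
            intro d; by_cases h : d = c <;> simp [h]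
          simp only [this]
          rw [← Finset.sum_filter, Finset.sum_const, Finset.filter_ne',
            Finset.card_erase_of_mem (Finset.mem_univ _)]
          simp
      _ ≤ _ := by
          apply Finset.sum_le_sum
          intro d _
          split_ifs
          · exact le_rfl
          · exact kLab_pos _ _ _
  have h3 := g.bdA
  have h4 := g.bdB
  omega

lemma colorCount_ge {N k : ℕ} (hN : 2 ≤ N) (f : Sym2 (Fin N ⊕ Fin k) → ℕ)
    (hf : IsLocalAntimagic (PK N k) f) : k + 2 ≤ colorCount (PK N k) f := by
  let φ : Fin 2 ⊕ Fin k → Fin N ⊕ Fin k := Sum.map (Fin.castLE hN) id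
  have hφ : ∀ x y, x ≠ y → (PK N k).Adj (φ x) (φ y) := by
    rintro (i | c) (j | d) h
    · refine (joinG_ll _ _ _ _).2 ?_
      rw [pathGraph_adj]
      have : i ≠ j := fun hh => h (by rw [hh])
      have : i.val ≠ j.val := fun hh => this (Fin.ext hh)
      simp only [Fin.val_castLE]
      omega
    · exact joinG_lr _ _ _ _
    · exact joinG_rl _ _ _ _
    · refine (joinG_rr _ _ _ _).2 ?_
      exact fun hh => h (by simpa using hh)
  have : (Finset.univ : Finset (Fin 2 ⊕ Fin k)).card ≤ colorCount (PK N k) f := by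
    apply Finset.card_le_card_of_injOn (fun x => vertexWeight (PK N k) f (φ x))
    · intro x _
      simp
    · intro x _ y _ hxy
      by_contra hne
      exact hf.2 (hφ x y hne) hxy
  simp at this
  omega

lemma good_antimagic {N k : ℕ} {e : ℕ → ℕ} {M : ℕ → ℕ → ℕ} {A B : ℕ} (hN : 1 ≤ N)
    (hk : k ≠ 2) (g : Good N k e M A B) : IsLocalAntimagic (PK N k) (lab N k e M) := by
  refine ⟨lab_bij hN g.toLab, ?_⟩
  have hl : ∀ (i : Fin N) (c : Fin k), vertexWeight (PK N k) (lab N k e M) (Sum.inl i) <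
      vertexWeight (PK N k) (lab N k e M) (Sum.inr c) := by
    intro i c
    have h := weight_inr_big g c
    rw [weight_inl, g.sum i i.2]
    split_ifs
    · exact h.1
    · exact h.2
  rintro (i | c) (j | d) h
  · rw [weight_inl, weight_inl, g.sum i i.2, g.sum j j.2]
    rw [joinG_ll, pathGraph_adj] at h
    have := g.ne
    split_ifs <;> omega
  · exact (hl i d).ne
  · exact (hl j c).ne'
  · rw [joinG_rr, SimpleGraph.top_adj] at h
    rcases lt_or_gt_of_ne h with h | h
    · exact (weight_inr_lt g hk h).ne
    · exact (weight_inr_lt g hk h).ne'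

lemma good_color {N k : ℕ} {e : ℕ → ℕ} {M : ℕ → ℕ → ℕ} {A B : ℕ}
    (g : Good N k e M A B) : colorCount (PK N k) (lab N k e M) ≤ k + 2 := by
  unfold colorCount
  have : Finset.univ.image (vertexWeight (PK N k) (lab N k e M)) ⊆
      (Finset.univ.image fun c : Fin k => vertexWeight (PK N k) (lab N k e M) (Sum.inr c)) ∪
        {A, B} := by
    intro w hw
    simp only [Finset.mem_image, Finset.mem_univ, true_and] at hw
    obtain ⟨i | c, rfl⟩ := hw
    · rw [weight_inl, g.sum i i.2]
      split_ifs <;> simp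
    · simp
  refine (Finset.card_le_card this).trans ((Finset.card_union_le _ _).trans ?_)
  have h1 : (Finset.univ.image fun c : Fin k =>
      vertexWeight (PK N k) (lab N k e M) (Sum.inr c)).card ≤ k := by
    simpa using Finset.card_image_le (s := (Finset.univ : Finset (Fin k)))
      (f := fun c : Fin k => vertexWeight (PK N k) (lab N k e M) (Sum.inr c))
  have h2 : ({A, B} : Finset ℕ).card ≤ 2 := Finset.card_le_two
  omega

lemma chiLA_of_good {N k : ℕ} {e : ℕ → ℕ} {M : ℕ → ℕ → ℕ} {A B : ℕ} (hN : 2 ≤ N)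
    (hk : k ≠ 2) (g : Good N k e M A B) : chiLA (PK N k) = k + 2 := by
  have ha := good_antimagic (by omega) hk g
  have hc : colorCount (PK N k) (lab N k e M) = k + 2 :=
    le_antisymm (good_color g) (colorCount_ge hN _ ha)
  apply le_antisymm
  · exact Nat.sInf_le ⟨_, ha, hc⟩
  · have hmem : k + 2 ∈ {n | ∃ f : Sym2 (Fin N ⊕ Fin k) → ℕ,
        IsLocalAntimagic (PK N k) f ∧ colorCount (PK N k) f = n} := ⟨_, ha, hc⟩
    refine le_csInf ⟨_, hmem⟩ ?_
    rintro n ⟨f, hf, rfl⟩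
    exact colorCount_ge hN f hf

/-- Adding two columns. -/
lemma good_step {N k : ℕ} {e : ℕ → ℕ} {M : ℕ → ℕ → ℕ} {A B : ℕ} (hN : 2 ≤ N) (hk : 1 ≤ k)
    (g : Good N k e M A B) : ∃ e' M' A' B', Good N (k + 2) e' M' A' B' := by
  set D := N - 1 + N * k with hD
  have hD' : N - 1 + N * (k + 2) = D + 2 * N := by rw [hD]; ring
  let M' : ℕ → ℕ → ℕ := fun i c =>
    if c < k then M i c else if c = k then D + 1 + i else D + 2 * N - i
  have m0 : ∀ i c, c < k → M' i c = M i c := fun i c h => if_pos h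
  have m1 : ∀ i, M' i k = D + 1 + i := fun i => by simp [M']
  have m2 : ∀ i, M' i (k + 1) = D + 2 * N - i := fun i => by simp [M']
  have cc : ∀ c, c < k + 2 → c < k ∨ c = k ∨ c = k + 1 := fun c h => by omega
  have hMle := g.M_le
  rw [← hD] at hMle
  have hele := g.e_le
  rw [← hD] at hele
  have hsum : ∀ i, i < N → ∑ c ∈ range (k + 2), M' i c =
      ∑ c ∈ range k, M i c + (2 * D + 2 * N + 1) := by
    intro i hi
    have hh : ∑ c ∈ range k, M' i c = ∑ c ∈ range k, M i c :=
      Finset.sum_congr rfl (fun c hc => m0 i c (Finset.mem_range.1 hc))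
    rw [Finset.sum_range_succ, Finset.sum_range_succ, m1, m2, hh]
    omega
  have hcol : ∀ c, c < k → ∑ i ∈ range N, M' i c = ∑ i ∈ range N, M i c :=
    fun c hc => Finset.sum_congr rfl fun i _ => m0 i c hc
  have hbig : (k - 1) * (D + 1) + (2 * D + 2 * N + 1) ≤ (k + 2 - 1) * (D + 2 * N + 1) := by
    obtain ⟨j, rfl⟩ : ∃ j, k = j + 1 := ⟨k - 1, by omega⟩
    have : j + 1 + 2 - 1 = j + 2 := by omega
    rw [this, Nat.add_sub_cancel]
    nlinarith [Nat.zero_le (j * N)]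
  refine ⟨e, M', A + (2 * D + 2 * N + 1), B + (2 * D + 2 * N + 1), ⟨⟨g.e_pos, ?_, ?_, ?_,
    g.e_inj, ?_, ?_⟩, ?_, ?_, ?_, ?_, ?_⟩⟩
  · intro i hi
    rw [hD']
    have := hele i hi
    omega
  · intro i c hi hc
    rcases cc c hc with h | rfl | rfl
    · rw [m0 i c h]; exact g.M_pos i c hi h
    · rw [m1]; omega
    · rw [m2]; omega
  · intro i c hi hc
    rw [hD']
    rcases cc c hc with h | rfl | rfl
    · rw [m0 i c h]
      have := hMle i c hi h
      omega
    · rw [m1]; omega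
    · rw [m2]; omega
  · intro i c j d hi hc hj hd heq
    rcases cc c hc with h | rfl | rfl <;> rcases cc d hd with h' | rfl | rfl
    · rw [m0 i c h, m0 j d h'] at heq
      exact g.M_inj i c j d hi h hj h' heq
    · rw [m0 i c h, m1] at heq
      have := hMle i c hi h
      omega
    · rw [m0 i c h, m2] at heq
      have := hMle i c hi h
      omega
    · rw [m0 j d h', m1] at heq
      have := hMle j d hj h'
      omega
    · rw [m1, m1] at heq
      omega
    · rw [m1, m2] at heq
      omega
    · rw [m0 j d h', m2] at heq
      have := hMle j d hj h'
      omega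
    · rw [m1, m2] at heq
      omega
    · rw [m2, m2] at heq
      omega
  · intro i j c hi hj hc
    have := hele i hi
    rcases cc c hc with h | rfl | rfl
    · rw [m0 j c h]; exact g.e_M i j c hi hj h
    · rw [m1]; omega
    · rw [m2]; omega
  · intro i hi
    rw [hsum i hi, ← add_assoc, g.sum i hi]
    split_ifs <;> rfl
  · have := g.ne
    omega
  · intro c d hcd hd
    rcases cc c (by omega) with h | rfl | rfl <;> rcases cc d hd with h' | rfl | rfl
    · rw [hcol c h, hcol d h']
      exact g.mono c d hcd h'
    · apply Finset.sum_le_sum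
      intro i hi
      rw [Finset.mem_range] at hi
      rw [m0 i c h, m1]
      have := hMle i c hi h
      omega
    · apply Finset.sum_le_sum
      intro i hi
      rw [Finset.mem_range] at hi
      rw [m0 i c h, m2]
      have := hMle i c hi h
      omega
    · omega
    · exact le_rfl
    · apply Finset.sum_le_sum
      intro i hi
      rw [Finset.mem_range] at hi
      rw [m1, m2]
      omega
    · omega
    · omega
    · exact le_rfl
  · have := g.bdA
    rw [← hD] at this
    rw [hcol 0 (by omega), hD']
    omega
  · have := g.bdB
    rw [← hD] at this
    rw [hcol 0 (by omega), hD']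
    omega

lemma good_steps {N k : ℕ} (hN : 2 ≤ N) (hk : 1 ≤ k) (h : ∃ e M A B, Good N k e M A B) (t : ℕ) :
    ∃ e M A B, Good N (k + 2 * t) e M A B := by
  induction t with
  | zero => exact h
  | succ t ih =>
    obtain ⟨e, M, A, B, g⟩ := ih
    have := good_step (k := k + 2 * t) hN (by omega) g
    exact this

/-- Fans: reduction to one column. -/
lemma good_fan {N : ℕ} (e s : ℕ → ℕ) (A B : ℕ)
    (he : ∀ i, i + 1 < N → 1 ≤ e i ∧ e i ≤ 2 * N - 1)
    (hs : ∀ i, i < N → 1 ≤ s i ∧ s i ≤ 2 * N - 1)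
    (he_inj : ∀ i j, i + 1 < N → j + 1 < N → e i = e j → i = j)
    (hs_inj : ∀ i j, i < N → j < N → s i = s j → i = j)
    (hes : ∀ i j, i + 1 < N → j < N → e i ≠ s j)
    (hsum : ∀ i, i < N → pathPart N e i + s i = if i % 2 = 0 then A else B)
    (hne : A ≠ B) (hA : A < ∑ i ∈ range N, s i) (hB : B < ∑ i ∈ range N, s i) :
    ∃ e M A B, Good N 1 e M A B := by
  refine ⟨e, fun i _ => s i, A, B, ⟨⟨fun i hi => (he i hi).1, ?_, fun i c hi _ => (hs i hi).1, ?_,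
    he_inj, ?_, fun i j c hi hj _ => hes i j hi hj⟩, ?_, hne, fun _ _ _ _ => le_rfl, ?_, ?_⟩⟩
  · intro i hi
    have := he i hi
    omega
  · intro i c hi _
    have := hs i hi
    omega
  · intro i c j d hi hc hj hd h
    exact ⟨hs_inj i j hi hj h, by omega⟩
  · intro i hi
    simpa using hsum i hi
  · simpa using hA
  · simpa using hB

set_option maxHeartbeats 4000000 in
lemma fan_odd (t : ℕ) : ∃ e M A B, Good (2 * (2 * t + 1)) 1 e M A B := by
  let e : ℕ → ℕ := fun i => if i % 2 = 1 then (i + 1) / 2 else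
    if i % 4 = 0 then 4 * t + 1 - i / 4 else 3 * t - i / 4
  let s : ℕ → ℕ := fun i => if i = 4 * t + 1 then 8 * t + 3 else
    if i % 4 = 0 then 5 * t + 2 - i / 4 else if i % 4 = 1 then 7 * t + 2 - i / 4 else
    if i % 4 = 2 then 6 * t + 2 - i / 4 else 8 * t + 2 - i / 4
  have hlast : s (4 * t + 1) = 8 * t + 3 := by simp [s]
  have hlow : 4 * t + 2 ≤ s (4 * t) := by
    simp only [s]; split_ifs <;> omega
  have hsum : 12 * t + 5 ≤ ∑ i ∈ range (2 * (2 * t + 1)), s i := by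
    rw [show 2 * (2 * t + 1) = 4 * t + 1 + 1 by ring, Finset.sum_range_succ,
      Finset.sum_range_succ]
    omega
  refine good_fan e s (9 * t + 3) (11 * t + 4) ?_ ?_ ?_ ?_ ?_ ?_ (by omega) (by omega) (by omega)
  · intro i hi
    simp only [e]; split_ifs <;> omega
  · intro i hi
    simp only [s]; split_ifs <;> omega
  · intro i j hi hj h
    simp only [e] at h; split_ifs at h <;> omega
  · intro i j hi hj h
    simp only [s] at h; split_ifs at h <;> omega
  · intro i j hi hj h
    simp only [e, s] at h; split_ifs at h <;> omega
  · intro i hi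
    simp only [e, s, pathPart]; split_ifs <;> omega

set_option maxHeartbeats 4000000 in
lemma fan_even (t : ℕ) (ht : 2 ≤ t) : ∃ e M A B, Good (2 * (2 * t)) 1 e M A B := by
  let e : ℕ → ℕ := fun i => if i % 2 = 1 then (i + 1) / 2 else
    if i % 4 = 0 then 3 * t - 1 - i / 4 else 6 * t - 1 - i / 4
  let s : ℕ → ℕ := fun i => if i = 4 * t - 1 then 5 * t - 1 else
    if i % 4 = 0 then 8 * t - 1 - i / 4 else if i % 4 = 1 then 7 * t - 1 - i / 4 else
    if i % 4 = 2 then 5 * t - 2 - i / 4 else 4 * t - 2 - i / 4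
  have h0 : s 0 = 8 * t - 1 := by
    have : ¬ 0 = 4 * t - 1 := by omega
    simp [s, this]
  have h1 : s 1 = 7 * t - 1 := by
    have : ¬ 1 = 4 * t - 1 := by omega
    simp [s, this]
  have hsum : 15 * t - 2 ≤ ∑ i ∈ range (2 * (2 * t)), s i := by
    have : ∑ i ∈ range 2, s i ≤ ∑ i ∈ range (2 * (2 * t)), s i :=
      Finset.sum_le_sum_of_subset (Finset.range_mono (by omega))
    rw [Finset.sum_range_succ, Finset.sum_range_one, h0, h1] at this
    omega
  refine good_fan e s (11 * t - 2) (10 * t - 1) ?_ ?_ ?_ ?_ ?_ ?_ (by omega) (by omega) (by omega)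
  · intro i hi
    simp only [e]; split_ifs <;> omega
  · intro i hi
    simp only [s]; split_ifs <;> omega
  · intro i j hi hj h
    simp only [e] at h; split_ifs at h <;> omega
  · intro i j hi hj h
    simp only [s] at h; split_ifs at h <;> omega
  · intro i j hi hj h
    simp only [e, s] at h; split_ifs at h <;> omega
  · intro i hi
    simp only [e, s, pathPart]; split_ifs <;> omega

/-- Base matrix for `P_4 ∨ K_3`. -/
def base43 (i c : ℕ) : ℕ :=
  (([[11, 13, 6], [7, 12, 10], [8, 4, 14], [5, 9, 15]] : List (List ℕ)).getD i []).getD c 0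

set_option synthInstance.maxHeartbeats 400000 in
set_option synthInstance.maxSize 2000 in
lemma good_four_three : ∃ e M A B, Good 4 3 e M A B := by
  refine ⟨fun i => i + 1, base43, 31, 32, ⟨⟨fun i hi => by omega, fun i hi => by omega,
    ?_, ?_, fun i j _ _ h => by omega, ?_, ?_⟩, ?_, by omega, ?_, by decide, by decide⟩⟩
  · have : ∀ i < 4, ∀ c < 3, 1 ≤ base43 i c := by decide
    exact fun i c hi hc => this i hi c hc
  · have : ∀ i < 4, ∀ c < 3, base43 i c ≤ 4 - 1 + 4 * 3 := by decide
    exact fun i c hi hc => this i hi c hc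
  · have : ∀ i < 4, ∀ c < 3, ∀ j < 4, ∀ d < 3, base43 i c = base43 j d → i = j ∧ c = d := by
      decide
    exact fun i c j d hi hc hj hd => this i hi c hc j hj d hd
  · have : ∀ j < 4, ∀ c < 3, 4 ≤ base43 j c := by decide
    intro i j c hi hj hc
    have := this j hj c hc
    omega
  · decide
  · have : ∀ d < 3, ∀ c ≤ d, ∑ i ∈ range 4, base43 i c ≤ ∑ i ∈ range 4, base43 i d := by decide
    exact fun c d h hd => this d hd c h

lemma good_exists (m n : ℕ) (hm : 1 ≤ m) (hn : 1 ≤ n) (h : ¬(m = 2 ∧ n = 1)) :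
    ∃ e M A B, Good (2 * m) (2 * n - 1) e M A B := by
  by_cases h2 : m = 2
  · subst h2
    have := good_steps (N := 4) (k := 3) (by omega) (by omega) good_four_three (n - 2)
    rwa [show 3 + 2 * (n - 2) = 2 * n - 1 by omega] at this
  · have h1 : ∃ e M A B, Good (2 * m) 1 e M A B := by
      rcases Nat.even_or_odd' m with ⟨t, rfl | rfl⟩
      · exact fan_even t (by omega)
      · exact fan_odd t
    have := good_steps (by omega) le_rfl h1 (n - 1)
    rwa [show 1 + 2 * (n - 1) = 2 * n - 1 by omega] at this

/-- Spoke labels for `P_4 ∨ K_1`. -/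
def spoke4 (i : ℕ) : ℕ := ([6, 5, 7, 4] : List ℕ).getD i 0

lemma lab_four : Lab 4 1 (fun i => i + 1) (fun i _ => spoke4 i) := by
  have hs : ∀ i < 4, 4 ≤ spoke4 i ∧ spoke4 i ≤ 7 := by decide
  have hinj : ∀ i < 4, ∀ j < 4, spoke4 i = spoke4 j → i = j := by decide
  refine ⟨fun i hi => by omega, fun i hi => by omega, ?_, ?_, fun i j _ _ h => by omega, ?_, ?_⟩
  · intro i c hi _
    have := hs i hi
    omega
  · intro i c hi _
    have := hs i hi
    omega
  · intro i c j d hi hc hj hd h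
    exact ⟨hinj i hi j hj h, by omega⟩
  · intro i j c hi hj hc
    have := hs j hj
    omega

/-- Boolean test used for the exhaustive search on `P_4 ∨ K_1`. -/
def chk (e0 e1 e2 s0 s1 : ℕ) : Bool :=
  Nat.ble (e1 + e2 + 1) (e0 + s0) && (Nat.ble (e0 + s0) (e1 + e2 + 7) &&
  (Nat.ble (e2 + 1) (e0 + e1 + s1) && (Nat.ble (e0 + e1 + s1) (e2 + 7) &&
  ((e0 + s0 != e0 + e1 + s1) &&
  @decide ([e0, e1, e2, s0, s1, e0 + s0 - (e1 + e2), e0 + e1 + s1 - e2].Nodup)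
    (@List.nodupDecidable ℕ instDecidableEqNat _)))))

lemma chk_false : ∀ e0 < 7, ∀ e1 < 7, ∀ e2 < 7, ∀ s0 < 7, ∀ s1 < 7,
    chk (e0 + 1) (e1 + 1) (e2 + 1) (s0 + 1) (s1 + 1) = false := by
  decide +kernel

lemma no_three (e0 e1 e2 s0 s1 s2 s3 : ℕ)
    (hr : ∀ x ∈ [e0, e1, e2, s0, s1, s2, s3], 1 ≤ x ∧ x ≤ 7)
    (hd : [e0, e1, e2, s0, s1, s2, s3].Nodup)
    (hA : e0 + s0 = e1 + e2 + s2) (hB : e0 + e1 + s1 = e2 + s3)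
    (hne : e0 + s0 ≠ e0 + e1 + s1) : False := by
  simp only [List.mem_cons, List.not_mem_nil, or_false, forall_eq_or_imp, forall_eq] at hr
  obtain ⟨r0, r1, r2, r3, r4, r5, r6⟩ := hr
  have h := chk_false (e0 - 1) (by omega) (e1 - 1) (by omega) (e2 - 1) (by omega)
    (s0 - 1) (by omega) (s1 - 1) (by omega)
  rw [Nat.sub_add_cancel r0.1, Nat.sub_add_cancel r1.1, Nat.sub_add_cancel r2.1,
    Nat.sub_add_cancel r3.1, Nat.sub_add_cancel r4.1] at h
  have h2 : s2 = e0 + s0 - (e1 + e2) := by omega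
  have h3 : s3 = e0 + e1 + s1 - e2 := by omega
  rw [h2, h3] at hd
  have h' : chk e0 e1 e2 s0 s1 = true := by
    unfold chk
    simp only [Bool.and_eq_true, Nat.ble_eq, bne_iff_ne,
      decide_eq_true_eq]
    refine ⟨by omega, by omega, by omega, by omega, hne, hd⟩
  rw [h] at h'
  exact absurd h' (by simp)

lemma four_ge (f : Sym2 (Fin 4 ⊕ Fin 1) → ℕ) (hf : IsLocalAntimagic (PK 4 1) f) :
    4 ≤ colorCount (PK 4 1) f := by
  by_contra hlt
  have hc : (Finset.univ.image (vertexWeight (PK 4 1) f)).card ≤ 3 := by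
    unfold colorCount at hlt; omega
  set W := vertexWeight (PK 4 1) f with hW
  have a01 : W (Sum.inl 0) ≠ W (Sum.inl 1) :=
    hf.2 ((joinG_ll _ _ _ _).2 (by rw [pathGraph_adj]; decide))
  have a12 : W (Sum.inl 1) ≠ W (Sum.inl 2) :=
    hf.2 ((joinG_ll _ _ _ _).2 (by rw [pathGraph_adj]; decide))
  have a23 : W (Sum.inl 2) ≠ W (Sum.inl 3) :=
    hf.2 ((joinG_ll _ _ _ _).2 (by rw [pathGraph_adj]; decide))
  have ac : ∀ i, W (Sum.inl i) ≠ W (Sum.inr 0) := fun i => hf.2 (joinG_lr _ _ _ _)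
  have hmem : ∀ x, W x ∈ ({W (Sum.inl 0), W (Sum.inl 1), W (Sum.inr 0)} : Finset ℕ) := by
    intro x
    have h3 : ({W (Sum.inl 0), W (Sum.inl 1), W (Sum.inr 0)} : Finset ℕ).card = 3 :=
      Finset.card_eq_three.2 ⟨_, _, _, a01, ac 0, ac 1, rfl⟩
    have hsub : ({W (Sum.inl 0), W (Sum.inl 1), W (Sum.inr 0)} : Finset ℕ) ⊆
        Finset.univ.image W := by
      intro y hy
      simp only [Finset.mem_insert, Finset.mem_singleton] at hy
      rcases hy with rfl | rfl | rfl <;> exact Finset.mem_image_of_mem _ (Finset.mem_univ _)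
    rw [Finset.eq_of_subset_of_card_le hsub (by omega)]
    exact Finset.mem_image_of_mem _ (Finset.mem_univ _)
  have e2 : W (Sum.inl 0) = W (Sum.inl 2) := by
    have := hmem (Sum.inl 2)
    simp only [Finset.mem_insert, Finset.mem_singleton] at this
    rcases this with h | h | h
    · exact h.symm
    · exact absurd h.symm a12
    · exact absurd h (ac 2)
  have e3 : W (Sum.inl 1) = W (Sum.inl 3) := by
    have := hmem (Sum.inl 3)
    simp only [Finset.mem_insert, Finset.mem_singleton] at this
    rcases this with h | h | h
    · exact absurd (e2.symm.trans h.symm) a23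
    · exact h.symm
    · exact absurd h (ac 3)
  have w : ∀ i : Fin 4, W (Sum.inl i) =
      (∑ j : Fin 4, if i.val + 1 = j.val ∨ j.val + 1 = i.val then
        f s(Sum.inl i, Sum.inl j) else 0) + f s(Sum.inl i, Sum.inr 0) := by
    intro i
    rw [hW, vertexWeight_eq, Fintype.sum_sum_type]
    congr 1
    · refine Finset.sum_congr rfl fun j _ => ?_
      simp only [joinG_ll, pathGraph_adj]
    · simp [joinG_lr]
  have w0 := w 0
  have w1 := w 1
  have w2 := w 2
  have w3 := w 3
  simp [Fin.sum_univ_four] at w0 w1 w2 w3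
  rw [Sym2.eq_swap (a := Sum.inl 1) (b := Sum.inl 0)] at w1
  rw [Sym2.eq_swap (a := Sum.inl 2) (b := Sum.inl 1)] at w2
  rw [Sym2.eq_swap (a := Sum.inl 3) (b := Sum.inl 2)] at w3
  have hcard : (PK 4 1).edgeSet.ncard = 7 := by
    rw [ncard_PK 4 1 (by omega)]; rfl
  have hb := hf.1
  rw [hcard] at hb
  let L : List (Sym2 (Fin 4 ⊕ Fin 1)) := [s(Sum.inl 0, Sum.inl 1), s(Sum.inl 1, Sum.inl 2),
    s(Sum.inl 2, Sum.inl 3), s(Sum.inl 0, Sum.inr 0), s(Sum.inl 1, Sum.inr 0),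
    s(Sum.inl 2, Sum.inr 0), s(Sum.inl 3, Sum.inr 0)]
  have hL : ∀ x ∈ L, x ∈ (PK 4 1).edgeSet := by
    intro x hx
    simp only [L, List.mem_cons, List.not_mem_nil, or_false] at hx
    rcases hx with rfl | rfl | rfl | rfl | rfl | rfl | rfl
    · exact (joinG_ll _ _ _ _).2 (by rw [pathGraph_adj]; decide)
    · exact (joinG_ll _ _ _ _).2 (by rw [pathGraph_adj]; decide)
    · exact (joinG_ll _ _ _ _).2 (by rw [pathGraph_adj]; decide)
    all_goals exact joinG_lr _ _ _ _
  have hLn : L.Nodup := by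
    simp [L]
  have hr : ∀ y ∈ L.map f, 1 ≤ y ∧ y ≤ 7 := by
    intro y hy
    obtain ⟨x, hx, rfl⟩ := List.mem_map.1 hy
    exact hb.1 (hL x hx)
  have hd : (L.map f).Nodup := by
    refine List.Nodup.map_on ?_ hLn
    intro x hx y hy h
    exact hb.2.1 (hL x hx) (hL y hy) h
  refine no_three _ _ _ _ _ _ _ hr hd ?_ ?_ ?_ <;> omega

lemma chiLA_four : chiLA (PK 4 1) = 4 := by
  have hw : ∀ i : Fin 4, vertexWeight (PK 4 1) (lab 4 1 (fun i => i + 1) (fun i _ => spoke4 i))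
      (Sum.inl i) = ([7, 8, 12, 7] : List ℕ).getD i.val 0 := by
    intro i
    rw [weight_inl]
    fin_cases i <;> rfl
  have hc : ∀ c : Fin 1, vertexWeight (PK 4 1) (lab 4 1 (fun i => i + 1) (fun i _ => spoke4 i))
      (Sum.inr c) = 22 := by
    intro c
    rw [weight_inr]
    fin_cases c
    simp [Finset.sum_range_succ, spoke4]
  have ha : IsLocalAntimagic (PK 4 1) (lab 4 1 (fun i => i + 1) (fun i _ => spoke4 i)) := by
    refine ⟨lab_bij (by omega) lab_four, ?_⟩
    rintro (i | c) (j | d) h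
    · rw [joinG_ll, pathGraph_adj] at h
      rw [hw, hw]
      fin_cases i <;> fin_cases j <;> simp at h ⊢
    · rw [hw, hc]
      fin_cases i <;> simp
    · rw [hw, hc]
      fin_cases j <;> simp
    · rw [joinG_rr, SimpleGraph.top_adj] at h
      exact absurd (Subsingleton.elim c d) h
  have hle : colorCount (PK 4 1) (lab 4 1 (fun i => i + 1) (fun i _ => spoke4 i)) ≤ 4 := by
    unfold colorCount
    have hsub : Finset.univ.image (vertexWeight (PK 4 1)
        (lab 4 1 (fun i => i + 1) (fun i _ => spoke4 i))) ⊆ {7, 8, 12, 22} := by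
      intro w hw'
      simp only [Finset.mem_image, Finset.mem_univ, true_and] at hw'
      obtain ⟨i | c, rfl⟩ := hw'
      · rw [hw]
        fin_cases i <;> simp
      · rw [hc]; simp
    exact (Finset.card_le_card hsub).trans Finset.card_le_four
  have heq := le_antisymm hle (four_ge _ ha)
  apply le_antisymm
  · exact Nat.sInf_le ⟨_, ha, heq⟩
  · have hmem : 4 ∈ {n | ∃ f : Sym2 (Fin 4 ⊕ Fin 1) → ℕ,
        IsLocalAntimagic (PK 4 1) f ∧ colorCount (PK 4 1) f = n} := ⟨_, ha, heq⟩
    refine le_csInf ⟨_, hmem⟩ ?_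
    rintro n ⟨f, hf, rfl⟩
    exact four_ge f hf

/-- Theorem: For all integers `m, n ≥ 1` with `(m,n) ≠ (2,1)`,
`χ_la(P_{2m} ∨ K_{2n−1}) = 2n + 1`; in the exceptional case, `χ_la(P_4 ∨ K_1) = 4`. -/
theorem chiLA_path_join_completeOdd (m n : ℕ) (hm : 1 ≤ m) (hn : 1 ≤ n) :
    (¬(m = 2 ∧ n = 1) →
      chiLA (joinG (pathGraph (2 * m)) (⊤ : SimpleGraph (Fin (2 * n - 1)))) = 2 * n + 1) ∧
    chiLA (joinG (pathGraph 4) (⊤ : SimpleGraph (Fin 1))) = 4 := by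
  refine ⟨fun h => ?_, chiLA_four⟩
  obtain ⟨e, M, A, B, g⟩ := good_exists m n hm hn h
  have := chiLA_of_good (by omega) (by omega) g
  rw [show 2 * n + 1 = 2 * n - 1 + 2 by omega]
  exact this
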